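/- arXiv:1205.6256 — 2 statements merged into one kernel-verified Lean document; each statement's English description precedes it below -/
import Mathlib

section
/- Let L be a finite ULD lattice. If the system Ω has a non-negative integer solution, then L belongs to L(ASM), i.e. L is order-isomorphic to the configuration space of some Abelian Sandpile Model reaching a unique fixed point. -/
open Classical

section CFGdefs

variable {V : Type*}

/-- Out-degree of a vertex in a directed multigraph with edge multiplicities `E`. -/
noncomputable def outDeg (E : V → V → ℕ) (v : V) : ℕ := ∑ᶠ u, E v u

/-- A vertex is a sink if all its outgoing edges are loops. -/
def IsSink (E : V → V → ℕ) (v : V) : Prop := outDeg E v = E v v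

/-- A vertex is firable in configuration `c`. -/
def Firable (E : V → V → ℕ) (c : V → ℕ) (v : V) : Prop :=
  ¬ IsSink E v ∧ outDeg E v ≤ c v

/-- The result of firing vertex `v` in configuration `c`. -/
noncomputable def fire (E : V → V → ℕ) (c : V → ℕ) (v : V) : V → ℕ :=
  fun u => if u = v then c v - outDeg E v + E v v else c u + E v u

/-- The configuration obtained by firing a list of vertices in order. -/
noncomputable def fireList (E : V → V → ℕ) : (V → ℕ) → List V → (V → ℕ)
  | c, [] => c
  | c, v :: l => fireList E (fire E c v) l

/-- A list of vertices is a valid firing sequence from `c`. -/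
def ValidSeq (E : V → V → ℕ) : (V → ℕ) → List V → Prop
  | _, [] => True
  | c, v :: l => Firable E c v ∧ ValidSeq E (fire E c v) l

/-- `c'` is reachable from `c` by a finite sequence of firings. -/
def Reaches (E : V → V → ℕ) (c c' : V → ℕ) : Prop :=
  ∃ l : List V, ValidSeq E c l ∧ fireList E c l = c'

/-- A configuration with no firable vertex. -/
def FixedPt (E : V → V → ℕ) (c : V → ℕ) : Prop := ∀ v, ¬ Firable E c v

/-- The chip firing game `CFG(G,O)` reaches a unique fixed point. -/
def ReachesUFP (E : V → V → ℕ) (O : V → ℕ) : Prop :=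
  ∃ fp : V → ℕ, Reaches E O fp ∧ FixedPt E fp ∧ ∀ c, Reaches E O c → Reaches E c fp

/-- The game is simple: in every firing sequence from `O` to the fixed point,
each vertex fires at most once. -/
def SimpleCFG (E : V → V → ℕ) (O : V → ℕ) : Prop :=
  ∀ l : List V, ValidSeq E O l → FixedPt E (fireList E O l) → l.Nodup

/-- Single firing step from `c` to `c'` by firing vertex `v`. -/
def FireStep (E : V → V → ℕ) (c : V → ℕ) (v : V) (c' : V → ℕ) : Prop :=
  Firable E c v ∧ fire E c v = c'

/-- The partial order `L` is order-isomorphic to the configuration space of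
`CFG(G,O)` ordered by reachability. -/
def Generates (E : V → V → ℕ) (O : V → ℕ) (L : Type*) [PartialOrder L] : Prop :=
  ∃ f : L ≃ {c : V → ℕ // Reaches E O c},
    ∀ a b : L, a ≤ b ↔ Reaches E (f a).val (f b).val

/-- The support graph is connected (as an undirected graph). -/
def ConnectedG (E : V → V → ℕ) : Prop :=
  ∀ u v : V, Relation.ReflTransGen (fun a b => 0 < E a b ∨ 0 < E b a) u v

/-- The support graph together with its initial data is an Abelian Sandpile Model. -/
def IsASM (E : V → V → ℕ) : Prop :=
  ConnectedG E ∧ ∃ s : V, IsSink E s ∧ (∀ v, IsSink E v → v = s) ∧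
    ∀ v₁ v₂ : V, v₁ ≠ v₂ → v₁ ≠ s → v₂ ≠ s → E v₁ v₂ = E v₂ v₁

/-- The directed multigraph has no directed cycle. -/
def AcyclicG (E : V → V → ℕ) : Prop :=
  ∀ v : V, ¬ Relation.TransGen (fun a b => 0 < E a b) v v

end CFGdefs

/-- `L` is generated by some chip firing game reaching a unique fixed point. -/
def MemLCFG (L : Type*) [PartialOrder L] : Prop :=
  ∃ (V : Type) (_ : Finite V) (E : V → V → ℕ) (O : V → ℕ),
    ReachesUFP E O ∧ Generates E O L

/-- `L` is generated by some Abelian Sandpile Model reaching a unique fixed point. -/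
def MemLASM (L : Type*) [PartialOrder L] : Prop :=
  ∃ (V : Type) (_ : Finite V) (E : V → V → ℕ) (O : V → ℕ),
    IsASM E ∧ ReachesUFP E O ∧ Generates E O L

section Latticedefs

variable {L : Type*} [Lattice L]

/-- `m` is meet-irreducible: it has exactly one upper cover. -/
def MeetIrred (m : L) : Prop := ∃! y, m ⋖ y

/-- `j` is join-irreducible: it has exactly one lower cover. -/
def JoinIrred (j : L) : Prop := ∃! y, y ⋖ j

/-- The set `M_x \ M_y` of meet-irreducibles above `x` but not above `y`. -/
def MsetDiff (x y : L) : Set L := {m | MeetIrred m ∧ x ≤ m ∧ ¬ y ≤ m}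

/-- The set `M \ M_a` of meet-irreducibles not above `a`. -/
def MnotAbove (a : L) : Set L := {m | MeetIrred m ∧ ¬ a ≤ m}

/-- `x⁺`: the join of all upper covers of `x`. -/
noncomputable def uplus [Fintype L] [OrderBot L] (x : L) : L :=
  Finset.univ.sup (fun y => if x ⋖ y then y else ⊥)

/-- `L` is upper locally distributive: for every `x ≠ ⊤` the interval `[x, x⁺]`
is isomorphic to a Boolean lattice (a hypercube). -/
def IsULD (L : Type*) [Lattice L] [Fintype L] [BoundedOrder L] : Prop :=
  ∀ x : L, x ≠ ⊤ → ∃ n : ℕ, Nonempty (↥(Set.Icc x (uplus x)) ≃o Set (Fin n))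

/-- `𝔘_m`: the minimal elements of `{x : ∃ y, x ⋖ y and 𝔪(x,y) = m}`. -/
def Uset (m : L) : Set L :=
  {x | Minimal (fun z => ∃ y, z ⋖ y ∧ MsetDiff z y = {m}) x}

/-- `𝔏_m`: the maximal elements of `{x : a ≰ x for every a ∈ 𝔘_m}`. -/
def Lset (m : L) : Set L :=
  {x | Maximal (fun z => ∀ a ∈ Uset m, ¬ a ≤ z) x}

/-- `(w, e)` is a (non-negative integer) solution of the system `E(m)`. -/
def SolvesE [OrderBot L] (m : L) (w : ℕ) (e : L → ℕ) : Prop :=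
  (Uset m = {(⊥ : L)} → 1 ≤ w) ∧
  (Uset m ≠ {(⊥ : L)} →
    (∀ a ∈ Lset m, (∑ᶠ x ∈ MnotAbove a, e x) < w) ∧
    (∀ a ∈ Uset m, w ≤ ∑ᶠ x ∈ MnotAbove a, e x))

/-- The system `E(m)` has a non-negative integer solution. -/
def HasSolE [OrderBot L] (m : L) : Prop := ∃ w e, SolvesE m w e

/-- The variable `e_{x,m}` occurs in the system `𝔈(m)`. -/
def VarOccurs [OrderBot L] (x m : L) : Prop :=
  MeetIrred m ∧ Uset m ≠ {(⊥ : L)} ∧ ∃ a ∈ Uset m ∪ Lset m, x ∈ MnotAbove a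

/-- `(W, Ee)` is a non-negative integer solution of the system `Ω`. -/
def SolvesOmega [OrderBot L] (W : L → ℕ) (Ee : L → L → ℕ) : Prop :=
  (∀ m : L, MeetIrred m → SolvesE m (W m) (fun x => Ee x m)) ∧
  (∀ m₁ m₂ : L, m₁ ≠ m₂ → VarOccurs m₁ m₂ → VarOccurs m₂ m₁ → Ee m₁ m₂ = Ee m₂ m₁)

/-- The edge relation of the directed graph `𝒢` on the meet-irreducibles. -/
def Gedge (m₁ m₂ : L) : Prop :=
  MeetIrred m₁ ∧ MeetIrred m₂ ∧ ∃ a ∈ Uset m₂, m₁ ∈ MnotAbove a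

end Latticedefs

/-- The system `Ω` has a non-negative integer solution. -/
def HasSolOmega (L : Type*) [Lattice L] [OrderBot L] : Prop :=
  ∃ W Ee, SolvesOmega (L := L) W Ee

/-- The directed graph `𝒢` on the meet-irreducibles is acyclic. -/
def GAcyclic (L : Type*) [Lattice L] : Prop :=
  ∀ m : L, ¬ Relation.TransGen (Gedge (L := L)) m m

/-!
A meet-irreducible `m` is the label of a cover starting at `x ≤ m` exactly when some `a ∈ 𝔘_m`
lies below `x`, and then the cover is unique. Hence climbing from `⊥` to `x` uses every label in
`M \ M_x` exactly once, and `x` may be identified with this set of labels.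

Take the meet-irreducibles together with a sink as the vertices of a graph, the vertex `m` having
`e_{m,n}` edges to `n`, and fire `m` when the label `m` is used. After the labels in `M \ M_x` have
fired, `m` has received `∑_{n ∈ M \ M_x} e_{n,m}` chips, and this reaches the threshold (`w_m`, or
`0` if `𝔘_m = {⊥}`) iff some `a ∈ 𝔘_m` lies below `x`: this is what the inequalities `E(m)` express.
So the firable vertices are the labels of the covers starting at `x`. Enough edges to the sink
prevent a vertex from firing a second time.
-/

section Reachability

variable {V P : Type*} {E : V → V → ℕ}

theorem reaches_iff_reflTransGen {c d : V → ℕ} :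
    Reaches E c d ↔ Relation.ReflTransGen (fun c d => ∃ v, FireStep E c v d) c d := by
  constructor
  · rintro ⟨l, hl, rfl⟩
    induction l generalizing c with
    | nil => exact .refl
    | cons v l ih => exact .head ⟨v, hl.1, rfl⟩ (ih hl.2)
  · intro h
    induction h using Relation.ReflTransGen.head_induction_on with
    | refl => exact ⟨[], trivial, rfl⟩
    | head hstep _ ih =>
      obtain ⟨v, hv, rfl⟩ := hstep
      obtain ⟨l, hl, hd⟩ := ih
      exact ⟨v :: l, ⟨hv, hl⟩, hd⟩

/-- `c` labels the elements of the order `P` injectively by configurations of the game on `E`, in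
such a way that every cover of `P` is a firing and every firing from a labelling configuration goes
up in `P`. This is how an order is exhibited as a configuration space. -/
structure IsConfigLabelling [PartialOrder P] (E : V → V → ℕ) (c : P → V → ℕ) : Prop where
  injective : Function.Injective c
  exists_fireStep_of_covBy {x y : P} : x ⋖ y → ∃ v, FireStep E (c x) v (c y)
  exists_lt_of_fireStep {x : P} {v : V} {d : V → ℕ} :
    FireStep E (c x) v d → ∃ y, x < y ∧ c y = d

namespace IsConfigLabelling

variable [PartialOrder P] {c : P → V → ℕ}

theorem exists_le_of_reaches (hc : IsConfigLabelling E c) {x : P} {d : V → ℕ}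
    (h : Reaches E (c x) d) : ∃ y, x ≤ y ∧ c y = d := by
  rw [reaches_iff_reflTransGen] at h
  induction h with
  | refl => exact ⟨x, le_rfl, rfl⟩
  | tail _ hstep ih =>
    obtain ⟨y, hxy, rfl⟩ := ih
    obtain ⟨v, hv⟩ := hstep
    obtain ⟨z, hyz, hz⟩ := hc.exists_lt_of_fireStep hv
    exact ⟨z, hxy.trans hyz.le, hz⟩

variable [LocallyFiniteOrder P]

theorem reaches_iff_le (hc : IsConfigLabelling E c) {x y : P} :
    Reaches E (c x) (c y) ↔ x ≤ y := by
  constructor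
  · intro h
    obtain ⟨z, hxz, hz⟩ := hc.exists_le_of_reaches h
    rwa [← hc.injective hz]
  · intro h
    exact reaches_iff_reflTransGen.2
      ((le_iff_reflTransGen_covBy.1 h).lift c fun _ _ => hc.exists_fireStep_of_covBy)

theorem generates [OrderBot P] (hc : IsConfigLabelling E c) : Generates E (c ⊥) P := by
  let f (x : P) : {d // Reaches E (c ⊥) d} := ⟨c x, hc.reaches_iff_le.2 bot_le⟩
  have hf : Function.Bijective f := by
    refine ⟨fun x y h => hc.injective (congrArg Subtype.val h), fun ⟨d, hd⟩ => ?_⟩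
    obtain ⟨y, -, hy⟩ := hc.exists_le_of_reaches hd
    exact ⟨y, Subtype.ext hy⟩
  exact ⟨Equiv.ofBijective f hf, fun _ _ => hc.reaches_iff_le.symm⟩

theorem reachesUFP [BoundedOrder P] (hc : IsConfigLabelling E c) : ReachesUFP E (c ⊥) := by
  refine ⟨c ⊤, hc.reaches_iff_le.2 bot_le, fun v hv => ?_, fun d hd => ?_⟩
  · obtain ⟨y, hy, -⟩ := hc.exists_lt_of_fireStep ⟨hv, rfl⟩
    exact not_top_lt hy
  · obtain ⟨y, -, rfl⟩ := hc.exists_le_of_reaches hd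
    exact hc.reaches_iff_le.2 le_top

end IsConfigLabelling

end Reachability

section Sandpile

variable {ι P : Type*} (w : ι → ι → ℕ) (T : ι → ℕ)

/-- The sandpile graph on `ι` with edge multiplicities `w` and firing thresholds `T`. The sink is
`none`. Of the `T i + 1` edges from `i` to the sink, one makes the out-degree of `i` larger than the
number of chips `i` can hold after a firing, and `T i` leave room for an initial load that falls
short of the out-degree by `T i`. -/
def sandpileEdges : Option ι → Option ι → ℕ
  | some i, some j => w i j
  | some i, none => T i + 1
  | none, _ => 0

/-- The configuration of the sandpile graph in which the vertices of `A` have fired once and the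
others have not fired. On `A` the subtraction is meant for sets `A` with `T i ≤ ∑ j ∈ A, w i j`. -/
noncomputable def sandpileConfig [Fintype ι] (A : Finset ι) : Option ι → ℕ
  | some i => if i ∈ A then ∑ j ∈ A, w i j - T i else ∑ j, w i j + 1 + ∑ j ∈ A, w i j
  | none => ∑ i ∈ A, (T i + 1)

theorem outDeg_sandpileEdges_some [Fintype ι] (i : ι) :
    outDeg (sandpileEdges w T) (some i) = T i + 1 + ∑ j, w i j := by
  rw [outDeg, finsum_eq_sum_of_fintype, Fintype.sum_option]
  rfl

theorem isSink_sandpileEdges_iff [Finite ι] {v : Option ι} :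
    IsSink (sandpileEdges w T) v ↔ v = none := by
  have := Fintype.ofFinite ι
  rcases v with _ | i
  · simp [IsSink, outDeg, sandpileEdges]
  · have hloop : w i i ≤ ∑ j, w i j :=
      Finset.single_le_sum_of_canonicallyOrdered (Finset.mem_univ i)
    simp only [IsSink, outDeg_sandpileEdges_some, sandpileEdges, reduceCtorEq, iff_false]
    omega

variable {w T}

theorem isASM_sandpileEdges [Finite ι] (hsymm : ∀ i j, w i j = w j i) :
    IsASM (sandpileEdges w T) := by
  refine ⟨?_, none, (isSink_sandpileEdges_iff w T).2 rfl,
    fun v => (isSink_sandpileEdges_iff w T).1, ?_⟩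
  · have to_sink (v : Option ι) : Relation.ReflTransGen
        (fun a b => 0 < sandpileEdges w T a b ∨ 0 < sandpileEdges w T b a) v none := by
      rcases v with _ | i
      · exact .refl
      · exact .single (.inl (Nat.succ_pos _))
    have : Std.Symm fun a b => 0 < sandpileEdges w T a b ∨ 0 < sandpileEdges w T b a :=
      ⟨fun _ _ => Or.symm⟩
    exact fun u v => (to_sink u).trans
      (symm_of _ (to_sink v))
  · rintro (_ | i) (_ | j) - hu hv
    · rfl
    · exact absurd rfl hu
    · exact absurd rfl hv
    · exact hsymm i j

variable [Fintype ι]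

theorem sandpileConfig_some_le_iff {A : Finset ι} {i : ι} :
    sandpileConfig w T A (some i) ≤ ∑ j, w i j ↔ i ∈ A := by
  have hA : ∑ j ∈ A, w i j ≤ ∑ j, w i j := Finset.sum_le_sum_of_subset A.subset_univ
  rw [sandpileConfig]
  split_ifs with hi <;> simp only [hi, iff_true, iff_false] <;> omega

theorem sandpileConfig_injective : Function.Injective (sandpileConfig w T) := by
  intro A B h
  ext i
  rw [← sandpileConfig_some_le_iff (w := w) (T := T), h, sandpileConfig_some_le_iff]

theorem firable_sandpileConfig_iff {A : Finset ι} {v : Option ι} :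
    Firable (sandpileEdges w T) (sandpileConfig w T A) v ↔
      ∃ i ∉ A, T i ≤ ∑ j ∈ A, w i j ∧ some i = v := by
  rcases v with _ | i
  · simp [Firable, isSink_sandpileEdges_iff]
  · have hA : ∑ j ∈ A, w i j ≤ ∑ j, w i j := Finset.sum_le_sum_of_subset A.subset_univ
    simp only [Firable, isSink_sandpileEdges_iff, outDeg_sandpileEdges_some, sandpileConfig,
      reduceCtorEq, not_false_eq_true, true_and, Option.some.injEq, exists_eq_right_right]
    split_ifs with hi <;> simp only [hi, not_true_eq_false, not_false_eq_true, true_and,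
      false_and, iff_false] <;> omega

theorem fire_sandpileConfig (hsymm : ∀ i j, w i j = w j i) (hloop : ∀ i, w i i = 0)
    {A : Finset ι} (hA : ∀ k ∈ A, T k ≤ ∑ j ∈ A, w k j) {i : ι} (hi : i ∉ A) :
    fire (sandpileEdges w T) (sandpileConfig w T A) (some i) =
      sandpileConfig w T (insert i A) := by
  funext v
  rcases v with _ | k
  · simp [fire, sandpileConfig, sandpileEdges, Finset.sum_insert hi, add_comm]
  · simp only [fire, sandpileConfig, sandpileEdges, Option.some.injEq, outDeg_sandpileEdges_some,
      Finset.mem_insert, Finset.sum_insert hi, hsymm i k, hi, if_false]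
    rcases eq_or_ne k i with rfl | hki
    · simp only [if_true, true_or, hloop]
      omega
    · simp only [hki, if_false, false_or]
      split_ifs with hkA
      · have := hA k hkA
        omega
      · omega

theorem isConfigLabelling_sandpileConfig [PartialOrder P] (hsymm : ∀ i j, w i j = w j i)
    (hloop : ∀ i, w i i = 0) (S : P ↪o Finset ι) (hcov : ∀ ⦃x y⦄, x ⋖ y → S x ⋖ S y)
    (hfired : ∀ x, ∀ i ∈ S x, T i ≤ ∑ j ∈ S x, w i j)
    (hadd : ∀ x, ∀ i ∉ S x, T i ≤ ∑ j ∈ S x, w i j → ∃ y, S y = insert i (S x)) :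
    IsConfigLabelling (sandpileEdges w T) fun x => sandpileConfig w T (S x) where
  injective := sandpileConfig_injective.comp S.injective
  exists_fireStep_of_covBy {x y} hxy := by
    obtain ⟨i, hi, hy⟩ := Finset.covBy_iff_exists_insert.1 (hcov hxy)
    have hT : T i ≤ ∑ j ∈ S x, w i j := by
      have := hfired y i (hy ▸ Finset.mem_insert_self i (S x))
      rwa [← hy, Finset.sum_insert hi, hloop, zero_add] at this
    refine ⟨some i, firable_sandpileConfig_iff.2 ⟨i, hi, hT, rfl⟩, ?_⟩
    rw [fire_sandpileConfig hsymm hloop (hfired x) hi, hy]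
  exists_lt_of_fireStep {x v d} hstep := by
    obtain ⟨hv, rfl⟩ := hstep
    obtain ⟨i, hi, hT, rfl⟩ := firable_sandpileConfig_iff.1 hv
    obtain ⟨y, hy⟩ := hadd x i hi hT
    refine ⟨y, S.lt_iff_lt.1 ?_, ?_⟩
    · rw [hy]
      exact Finset.ssubset_insert hi
    · rw [fire_sandpileConfig hsymm hloop (hfired x) hi, hy]

end Sandpile

section Semimodular

variable {L : Type*} [Lattice L] {x y z : L}

theorem covBy_sup_of_covBy_of_covBy [IsWeakUpperModularLattice L] (hy : x ⋖ y) (hz : x ⋖ z)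
    (hne : y ≠ z) : y ⋖ y ⊔ z := by
  obtain rfl : y ⊓ z = x := hy.wcovBy.inf_eq hz.wcovBy hne
  exact hy.sup_of_inf_of_inf_left hz

theorem covBy_sup_of_covBy_of_not_le [IsUpperModularLattice L] (hxy : x ⋖ y) (hxz : x ≤ z)
    (hyz : ¬ y ≤ z) : z ⋖ z ⊔ y := by
  have hx : z ⊓ y = x :=
    (hxy.eq_or_eq (le_inf hxz hxy.le) inf_le_right).resolve_right (hyz <| inf_eq_right.1 ·)
  exact CovBy.sup_of_inf_right (hx ▸ hxy)

theorem isUpperModularLattice_of_isWeakUpperModularLattice [IsStronglyAtomic L] [WellFoundedGT L]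
    [IsWeakUpperModularLattice L] : IsUpperModularLattice L where
  covBy_sup_of_inf_covBy {y z} hy := by
    suffices ∀ x ≤ z, ∀ y, x ⋖ y → ¬ y ≤ z → z ⋖ y ⊔ z from
      this _ inf_le_right y hy (hy.ne <| inf_eq_left.2 ·)
    clear hy y
    intro x hxz
    induction x using WellFoundedGT.induction with
    | ind x ih =>
      intro y hxy hyz
      rcases hxz.eq_or_lt with rfl | hlt
      · rwa [sup_eq_left.2 hxy.le]
      · obtain ⟨u, hxu, huz⟩ := hlt.exists_covby_le
        have huy : u ⋖ u ⊔ y :=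
          covBy_sup_of_covBy_of_covBy hxu hxy (by rintro rfl; exact hyz huz)
        have := ih u hxu.lt huz (u ⊔ y) huy (hyz <| le_sup_right.trans ·)
        rwa [sup_comm u y, sup_assoc, sup_eq_right.2 huz] at this

end Semimodular

section MeetIrreducible

variable {L : Type*} [Lattice L]

theorem MeetIrred.eq_of_covBy_of_not_le [IsStronglyAtomic L] {m y z : L} (hm : MeetIrred m)
    (hmy : m ⋖ y) (hmz : m ≤ z) (hyz : ¬ y ≤ z) : m = z := by
  by_contra hne
  obtain ⟨u, hmu, huz⟩ := (hmz.lt_of_ne hne).exists_covby_le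
  exact hyz (hm.unique hmu hmy ▸ huz)

theorem msetDiff_nonempty [WellFoundedGT L] {x y : L} (hyx : ¬ y ≤ x) :
    (MsetDiff x y).Nonempty := by
  obtain ⟨m, hxm, hm⟩ := exists_maximal_ge_of_wellFoundedGT (¬ y ≤ ·) x hyx
  have hlt : m < m ⊔ y := left_lt_sup.2 hm.prop
  have hle {z : L} (hz : m < z) : m ⊔ y ≤ z :=
    sup_le hz.le (not_not.1 (hm.not_prop_of_gt hz))
  have hcov : m ⋖ m ⊔ y := ⟨hlt, fun z hz => (hle hz).not_gt⟩
  exact ⟨m, ⟨m ⊔ y, hcov, fun z hz => ((hle hz.lt).eq_of_not_lt (hz.2 hlt)).symm⟩, hxm, hm.prop⟩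

theorem exists_mem_uset_le [WellFoundedLT L] {m x y : L} (hxy : x ⋖ y)
    (hm : MsetDiff x y = {m}) : ∃ a ∈ Uset m, a ≤ x := by
  obtain ⟨a, hax, ha⟩ := exists_minimal_le_of_wellFoundedLT
    (fun z => ∃ y, z ⋖ y ∧ MsetDiff z y = {m}) x ⟨y, hxy, hm⟩
  exact ⟨a, ha, hax⟩

theorem exists_mem_lset_ge [WellFoundedGT L] {m x : L} (hx : ∀ a ∈ Uset m, ¬ a ≤ x) :
    ∃ b ∈ Lset m, x ≤ b := by
  obtain ⟨b, hxb, hb⟩ := exists_maximal_ge_of_wellFoundedGT (fun z => ∀ a ∈ Uset m, ¬ a ≤ z) x hx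
  exact ⟨b, hb, hxb⟩

theorem le_of_mem_uset {m a : L} (ha : a ∈ Uset m) : a ≤ m := by
  obtain ⟨b, -, hb⟩ := ha.1
  have hm : m ∈ MsetDiff a b := hb ▸ rfl
  exact hm.2.1

end MeetIrreducible

section UpperLocallyDistributive

variable {L : Type*} [Lattice L] [Fintype L]

theorem le_uplus_of_covBy [OrderBot L] {x y : L} (hxy : x ⋖ y) : y ≤ uplus x := by
  have := Finset.le_sup (f := fun y => if x ⋖ y then y else ⊥) (Finset.mem_univ y)
  rwa [if_pos hxy] at this

namespace IsULD

variable [BoundedOrder L] {m x y z : L}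

theorem inf_sup_left_of_mem_Icc {a b c : L} (h : IsULD L) (hx : x ≠ ⊤)
    (ha : a ∈ Set.Icc x (uplus x)) (hb : b ∈ Set.Icc x (uplus x))
    (hc : c ∈ Set.Icc x (uplus x)) : a ⊓ (b ⊔ c) = a ⊓ b ⊔ a ⊓ c := by
  obtain ⟨n, ⟨f⟩⟩ := h x hx
  have : (⟨a, ha⟩ ⊓ (⟨b, hb⟩ ⊔ ⟨c, hc⟩) : Set.Icc x (uplus x)) =
      ⟨a, ha⟩ ⊓ ⟨b, hb⟩ ⊔ ⟨a, ha⟩ ⊓ ⟨c, hc⟩ :=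
    f.injective (by simp only [map_inf, map_sup, inf_sup_left])
  exact congrArg Subtype.val this

theorem isWeakUpperModularLattice (h : IsULD L) : IsWeakUpperModularLattice L where
  covBy_sup_of_inf_covBy_covBy {a b} ha hb := by
    refine ⟨left_lt_sup.2 (hb.ne <| inf_eq_right.2 ·), fun t hat htab => ?_⟩
    have haU := le_uplus_of_covBy ha
    have hbU := le_uplus_of_covBy hb
    have ht : t = a ⊔ t ⊓ b := by
      have := h.inf_sup_left_of_mem_Icc (ne_top_of_lt ha.lt)
        ⟨ha.le.trans hat.le, htab.le.trans (sup_le haU hbU)⟩ ⟨ha.le, haU⟩ ⟨hb.le, hbU⟩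
      rwa [inf_eq_left.2 htab.le, inf_eq_right.2 hat.le] at this
    rcases hb.eq_or_eq (inf_le_inf_right b hat.le) inf_le_right with htb | htb
    · rw [htb, sup_eq_left.2 inf_le_left] at ht
      exact hat.ne' ht
    · rw [htb] at ht
      exact htab.ne ht

theorem isUpperModularLattice (h : IsULD L) : IsUpperModularLattice L :=
  have := h.isWeakUpperModularLattice
  isUpperModularLattice_of_isWeakUpperModularLattice

theorem not_le_sup_of_covBy {u v : L} (h : IsULD L) (hy : x ⋖ y) (hu : x ⋖ u) (hv : x ⋖ v)
    (hyu : y ≠ u) (hyv : y ≠ v) : ¬ y ≤ u ⊔ v := by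
  intro hle
  have hdistrib := h.inf_sup_left_of_mem_Icc (ne_top_of_lt hy.lt) ⟨hy.le, le_uplus_of_covBy hy⟩
    ⟨hu.le, le_uplus_of_covBy hu⟩ ⟨hv.le, le_uplus_of_covBy hv⟩
  rw [inf_eq_left.2 hle, hy.wcovBy.inf_eq hu.wcovBy hyu,
    hy.wcovBy.inf_eq hv.wcovBy hyv, sup_idem] at hdistrib
  exact hy.ne' hdistrib

theorem subsingleton_msetDiff (h : IsULD L) (hxy : x ⋖ y) : (MsetDiff x y).Subsingleton := by
  have := h.isWeakUpperModularLattice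
  induction x using WellFoundedGT.induction generalizing y with
  | ind x ih =>
    rintro m₁ ⟨hm₁, hxm₁, hym₁⟩ m₂ ⟨hm₂, hxm₂, hym₂⟩
    rcases hxm₁.eq_or_lt with rfl | hlt₁
    · exact hm₁.eq_of_covBy_of_not_le hxy hxm₂ hym₂
    rcases hxm₂.eq_or_lt with rfl | hlt₂
    · exact (hm₂.eq_of_covBy_of_not_le hxy hxm₁ hym₁).symm
    obtain ⟨u₁, hu₁, hum₁⟩ := hlt₁.exists_covby_le
    obtain ⟨u₂, hu₂, hum₂⟩ := hlt₂.exists_covby_le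
    have hyu₁ : y ≠ u₁ := fun hy => hym₁ (hy ▸ hum₁)
    have hyu₂ : y ≠ u₂ := fun hy => hym₂ (hy ▸ hum₂)
    -- A third label `m` lying above both `u₁` and `u₂` links `m₁` to `m₂`.
    obtain ⟨m, hm, hum, hym⟩ := msetDiff_nonempty (h.not_le_sup_of_covBy hxy hu₁ hu₂ hyu₁ hyu₂)
    have eq_of_ge {u n : L} (hu : x ⋖ u) (hyu : y ≠ u) (hum : u ≤ m) (hn : MeetIrred n)
        (hun : u ≤ n) (hyn : ¬ y ≤ n) : n = m :=
      ih u hu.lt (covBy_sup_of_covBy_of_covBy hu hxy hyu.symm)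
        ⟨hn, hun, (hyn <| le_sup_right.trans ·)⟩ ⟨hm, hum, (hym <| le_sup_right.trans ·)⟩
    exact (eq_of_ge hu₁ hyu₁ (le_sup_left.trans hum) hm₁ hum₁ hym₁).trans
      (eq_of_ge hu₂ hyu₂ (le_sup_right.trans hum) hm₂ hum₂ hym₂).symm

theorem msetDiff_eq_singleton (h : IsULD L) (hxy : x ⋖ y) (hm : m ∈ MsetDiff x y) :
    MsetDiff x y = {m} :=
  (h.subsingleton_msetDiff hxy).eq_singleton_of_mem hm

theorem exists_covBy_msetDiff_eq_singleton {a : L} (h : IsULD L) (ha : a ∈ Uset m) (hax : a ≤ x)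
    (hxm : x ≤ m) : ∃ y, x ⋖ y ∧ MsetDiff x y = {m} := by
  have := h.isUpperModularLattice
  obtain ⟨b, hab, hb⟩ := ha.1
  obtain ⟨hm, -, hbm⟩ : m ∈ MsetDiff a b := hb ▸ rfl
  have hcov : x ⋖ x ⊔ b := covBy_sup_of_covBy_of_not_le hab hax (hbm <| ·.trans hxm)
  exact ⟨x ⊔ b, hcov, h.msetDiff_eq_singleton hcov ⟨hm, hxm, (hbm <| le_sup_right.trans ·)⟩⟩

theorem exists_mem_uset_le_of_not_le (h : IsULD L) (hm : MeetIrred m) (hx : ¬ x ≤ m) :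
    ∃ a ∈ Uset m, a ≤ x := by
  obtain ⟨z, hzx, hz⟩ := exists_minimal_le_of_wellFoundedLT (¬ · ≤ m) x hx
  have hbot : ⊥ < z := bot_lt_iff_ne_bot.2 (by rintro rfl; exact hz.prop bot_le)
  obtain ⟨y, -, hyz⟩ := hbot.exists_le_covby
  have hym : y ≤ m := not_not.1 (hz.not_prop_of_lt hyz.lt)
  obtain ⟨a, ha, hay⟩ :=
    exists_mem_uset_le hyz (h.msetDiff_eq_singleton hyz ⟨hm, hym, hz.prop⟩)
  exact ⟨a, ha, hay.trans (hyz.le.trans hzx)⟩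

theorem not_varOccurs_self (h : IsULD L) (m : L) : ¬ VarOccurs m m := by
  rintro ⟨hm, -, a, ha | ha, -, ham⟩
  · exact ham (le_of_mem_uset ha)
  · obtain ⟨b, hb, hba⟩ := h.exists_mem_uset_le_of_not_le hm ham
    exact ha.1 b hb hba

end IsULD

end UpperLocallyDistributive

section Omega

theorem finsum_mem_le_finsum_mem_of_subset {α N : Type*} [AddCommMonoid N] [PartialOrder N]
    [CanonicallyOrderedAdd N] {s t : Set α} (ht : t.Finite) (hst : s ⊆ t) (f : α → N) :
    ∑ᶠ x ∈ s, f x ≤ ∑ᶠ x ∈ t, f x := by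
  rw [finsum_mem_eq_finite_toFinset_sum f (ht.subset hst), finsum_mem_eq_finite_toFinset_sum f ht]
  exact Finset.sum_le_sum_of_subset (Set.Finite.toFinset_subset_toFinset.2 hst)

variable {L : Type*} [Lattice L]

theorem mnotAbove_subset_mnotAbove {x y : L} (hxy : x ≤ y) : MnotAbove x ⊆ MnotAbove y :=
  fun _ hm => ⟨hm.1, (hm.2 <| hxy.trans ·)⟩

variable [OrderBot L]

theorem SolvesE.congr {m : L} {w : ℕ} {e e' : L → ℕ} (h : SolvesE m w e) (hm : MeetIrred m)
    (he : ∀ n, VarOccurs n m → e n = e' n) : SolvesE m w e' := by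
  refine ⟨h.1, fun hU => ?_⟩
  have hsum {a : L} (ha : a ∈ Uset m ∪ Lset m) :
      ∑ᶠ n ∈ MnotAbove a, e n = ∑ᶠ n ∈ MnotAbove a, e' n :=
    finsum_mem_congr rfl fun n hn => he n ⟨hm, hU, a, ha, hn⟩
  exact ⟨fun a ha => hsum (.inr ha) ▸ (h.2 hU).1 a ha, fun a ha => hsum (.inl ha) ▸ (h.2 hU).2 a ha⟩

theorem SolvesE.exists_threshold [Finite L] {m : L} {w : ℕ} {e : L → ℕ} (h : SolvesE m w e) :
    ∃ t, ∀ x, t ≤ ∑ᶠ n ∈ MnotAbove x, e n ↔ ∃ a ∈ Uset m, a ≤ x := by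
  have hmono {x y : L} (hxy : x ≤ y) :
      ∑ᶠ n ∈ MnotAbove x, e n ≤ ∑ᶠ n ∈ MnotAbove y, e n :=
    finsum_mem_le_finsum_mem_of_subset (Set.toFinite _) (mnotAbove_subset_mnotAbove hxy) e
  by_cases hU : Uset m = {⊥}
  · exact ⟨0, fun x => by simp [hU]⟩
  obtain ⟨hlower, hupper⟩ := h.2 hU
  refine ⟨w, fun x => ⟨fun hw => ?_, fun ⟨a, ha, hax⟩ => (hupper a ha).trans (hmono hax)⟩⟩
  by_contra! hx
  obtain ⟨b, hb, hxb⟩ := exists_mem_lset_ge hx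
  exact (hw.trans (hmono hxb)).not_gt (hlower b hb)

/-- The edge weight between `m` and `n` read off from a solution `Ee` of `Ω`, namely the value of
whichever of the variables `e_{n,m}` and `e_{m,n}` occurs in `Ω`, and `0` if neither does. Values
of `Ee` at variables that do not occur need not be symmetric. -/
noncomputable def symmWeight (Ee : L → L → ℕ) (m n : L) : ℕ :=
  if VarOccurs n m then Ee n m else if VarOccurs m n then Ee m n else 0

theorem SolvesOmega.symmWeight_comm {W : L → ℕ} {Ee : L → L → ℕ} (h : SolvesOmega W Ee)
    (m n : L) : symmWeight Ee m n = symmWeight Ee n m := by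
  rcases eq_or_ne m n with rfl | hne
  · rfl
  unfold symmWeight
  split_ifs with hnm hmn
  · exact h.2 n m hne.symm hnm hmn
  all_goals rfl

theorem SolvesOmega.solvesE_symmWeight {W : L → ℕ} {Ee : L → L → ℕ} (h : SolvesOmega W Ee)
    {m : L} (hm : MeetIrred m) : SolvesE m (W m) (symmWeight Ee m) :=
  (h.1 m hm).congr hm fun _ hn => (if_pos hn).symm

end Omega

theorem IsULD.exists_symm_weight_threshold {L : Type*} [Lattice L] [Fintype L] [BoundedOrder L]
    (h : IsULD L) (hΩ : HasSolOmega L) :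
    ∃ (e : L → L → ℕ) (T : L → ℕ), (∀ m n, e m n = e n m) ∧ (∀ m, e m m = 0) ∧
      ∀ m, MeetIrred m → ∀ x, T m ≤ ∑ᶠ n ∈ MnotAbove x, e m n ↔ ∃ a ∈ Uset m, a ≤ x := by
  obtain ⟨W, Ee, hΩ⟩ := hΩ
  choose! T hT using fun m (hm : MeetIrred m) => (hΩ.solvesE_symmWeight hm).exists_threshold
  have hself (m : L) : symmWeight Ee m m = 0 := by
    simp only [symmWeight, h.not_varOccurs_self m, if_false]
  exact ⟨symmWeight Ee, T, hΩ.symmWeight_comm, hself, hT⟩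


section LabelSet

variable {ι L : Type*} [Fintype ι] [Lattice L] [WellFoundedGT L]
  (μ : ι ≃ {m : L // MeetIrred m}) {x y : L}

/-- The set `M \ M_x` of labels used on the way from `⊥` to `x`, embedding `L` into the subsets of
an index type `ι` for the meet-irreducibles. -/
noncomputable def labelSet : L ↪o Finset ι :=
  OrderEmbedding.ofMapLEIff (fun x => ({i | ¬ x ≤ μ i} : Finset ι)) fun x y => by
    simp only [Finset.subset_iff, Finset.mem_filter_univ]
    refine ⟨fun hsub => ?_, fun hxy i hx hy => hx (hxy.trans hy)⟩
    by_contra hxy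
    obtain ⟨m, hm, hym, hxm⟩ := msetDiff_nonempty hxy
    exact hsub (x := μ.symm ⟨m, hm⟩) (by simpa using hxm) (by simpa using hym)

variable {μ}

theorem mem_labelSet {i : ι} : i ∈ labelSet μ x ↔ ¬ x ≤ μ i :=
  Finset.mem_filter_univ i

theorem sum_labelSet {N : Type*} [AddCommMonoid N] (f : L → N) :
    ∑ i ∈ labelSet μ x, f (μ i) = ∑ᶠ m ∈ MnotAbove x, f m := by
  have himage : MnotAbove x = Subtype.val ∘ μ '' labelSet μ x := by
    ext m
    constructor
    · rintro ⟨hm, hxm⟩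
      exact ⟨μ.symm ⟨m, hm⟩, by simpa [mem_labelSet] using hxm, by simp⟩
    · rintro ⟨i, hi, rfl⟩
      exact ⟨(μ i).2, mem_labelSet.1 hi⟩
  rw [himage, finsum_mem_image (Subtype.val_injective.comp μ.injective).injOn]
  exact (finsum_mem_coe_finset _ _).symm

theorem labelSet_eq_insert {i : ι} (hxy : x ≤ y) (hi : MsetDiff x y = {(μ i : L)}) :
    labelSet μ y = insert i (labelSet μ x) := by
  ext j
  have hj : j = i ↔ x ≤ μ j ∧ ¬ y ≤ μ j := by
    rw [← μ.injective.eq_iff, ← Subtype.val_inj, ← Set.mem_singleton_iff, ← hi]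
    exact and_iff_right (μ j).2
  have hxyj : y ≤ μ j → x ≤ μ j := hxy.trans
  rw [Finset.mem_insert, mem_labelSet, mem_labelSet, hj]
  tauto

end LabelSet

theorem IsULD.labelSet_covBy {ι L : Type*} [Fintype ι] [Lattice L] [Fintype L] [BoundedOrder L]
    {μ : ι ≃ {m : L // MeetIrred m}} {x y : L} (h : IsULD L) (hxy : x ⋖ y) :
    labelSet μ x ⋖ labelSet μ y := by
  obtain ⟨m, hm⟩ := msetDiff_nonempty hxy.lt.not_ge
  have hlabel : MsetDiff x y = {(μ (μ.symm ⟨m, hm.1⟩) : L)} := by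
    simpa using h.msetDiff_eq_singleton hxy hm
  refine Finset.covBy_iff_exists_insert.2
    ⟨μ.symm ⟨m, hm.1⟩, ?_, (labelSet_eq_insert hxy.le hlabel).symm⟩
  simpa [mem_labelSet] using hm.2.1

theorem IsULD.isConfigLabelling_labelSet {ι L : Type*} [Fintype ι] [Lattice L] [Fintype L]
    [BoundedOrder L] (h : IsULD L) (μ : ι ≃ {m : L // MeetIrred m}) {e : L → L → ℕ} {T : L → ℕ}
    (hsymm : ∀ m n, e m n = e n m) (hself : ∀ m, e m m = 0)
    (hT : ∀ m, MeetIrred m → ∀ x, T m ≤ ∑ᶠ n ∈ MnotAbove x, e m n ↔ ∃ a ∈ Uset m, a ≤ x) :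
    IsConfigLabelling (sandpileEdges (fun i j => e (μ i) (μ j)) fun i => T (μ i))
      fun x => sandpileConfig (fun i j => e (μ i) (μ j)) (fun i => T (μ i)) (labelSet μ x) := by
  have hTμ (x : L) (i : ι) :
      T (μ i) ≤ ∑ j ∈ labelSet μ x, e (μ i) (μ j) ↔ ∃ a ∈ Uset (μ i : L), a ≤ x := by
    rw [sum_labelSet (e (μ i)), hT _ (μ i).2]
  refine isConfigLabelling_sandpileConfig (fun _ _ => hsymm _ _) (fun _ => hself _) (labelSet μ)
    (fun _ _ => h.labelSet_covBy) (fun x i hi => ?_) (fun x i hi hle => ?_)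
  · exact (hTμ x i).2 (h.exists_mem_uset_le_of_not_le (μ i).2 (mem_labelSet.1 hi))
  · obtain ⟨a, ha, hax⟩ := (hTμ x i).1 hle
    obtain ⟨y, hxy, hy⟩ :=
      h.exists_covBy_msetDiff_eq_singleton ha hax (not_not.1 (mem_labelSet.not.1 hi))
    exact ⟨y, labelSet_eq_insert hxy.le hy⟩

/-- if the system `Ω` of a finite ULD lattice `L` has a non-negative
integer solution, then `L` belongs to `L(ASM)`. -/
theorem stmt10 {L : Type*} [Lattice L] [Fintype L] [BoundedOrder L]
    (hULD : IsULD L) (hSol : HasSolOmega L) :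
    MemLASM L := by
  obtain ⟨e, T, hsymm, hself, hT⟩ := hULD.exists_symm_weight_threshold hSol
  let μ := (Fintype.equivFin {m : L // MeetIrred m}).symm
  let _ : LocallyFiniteOrder L := Fintype.toLocallyFiniteOrder
  have hlabel := hULD.isConfigLabelling_labelSet μ hsymm hself hT
  exact ⟨_, inferInstance, _, _, isASM_sandpileEdges fun _ _ => hsymm _ _, hlabel.reachesUFP,
    hlabel.generates⟩
end

section
/- Let L be a finite ULD lattice with meet-irreducibles M and let H be the undirected simple graph with vertex set M in which distinct m₁, m₂ are adjacent iff there exist x₁, x₂, x₃ ∈ L with x₁ ⋖ x₂, x₁ ⋖ x₃, 𝔪(x₁,x₂) = m₁ and 𝔪(x₁,x₃) = m₂. If L ∈ L(CFG) and H is a complete graph, then every chip firing game reaching a unique fixed point whose configuration space is order-isomorphic to L is simple. -/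
open Classical

/-!
In the configuration of a meet-irreducible `m` exactly one vertex is firable; call it the firing
vertex of `m`. A firable vertex stays firable, without losing chips, until it is fired.
Hence, if `x ⋖ y` is the firing of `v`, then `v` is still firable in every meet-irreducible above
`x` but not above `y`, so `v` is the firing vertex of each label of `x ⋖ y`. Two different covers
of the same element fire different vertices, so the firing vertices properly colour the graph `H`.
A vertex occurring twice in a firing sequence would give two distinct labels of the same colour,
which is impossible when `H` is complete.
-/

section ChipFiring

variable {V : Type*} {E : V → V → ℕ} {c d : V → ℕ} {v w : V}

theorem fire_apply_self_lt (hE : (E v).support.Finite) (h : Firable E c v) :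
    fire E c v v < c v := by
  have hloops : E v v ≤ outDeg E v := single_le_finsum v hE fun _ => Nat.zero_le _
  have hsink : outDeg E v ≠ E v v := h.1
  have hchips : outDeg E v ≤ c v := h.2
  simp only [fire, if_true]
  omega

theorem le_fire_apply_of_ne (h : v ≠ w) : c v ≤ fire E c w v := by
  simp [fire, h]

theorem Firable.of_le (hv : Firable E c v) (h : c v ≤ d v) : Firable E d v :=
  ⟨hv.1, hv.2.trans h⟩

theorem Firable.fire_of_ne (hv : Firable E c v) (h : v ≠ w) : Firable E (fire E c w) v :=
  hv.of_le (le_fire_apply_of_ne h)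

theorem fire_comm (hv : Firable E c v) (hw : Firable E c w) (h : v ≠ w) :
    fire E (fire E c w) v = fire E (fire E c v) w := by
  have hcv : outDeg E v ≤ c v := hv.2
  have hcw : outDeg E w ≤ c w := hw.2
  funext u
  rcases eq_or_ne u v with rfl | huv
  · simp only [fire, if_true, h, h.symm, if_false]
    omega
  · rcases eq_or_ne u w with rfl | huw
    · simp only [fire, if_true, h, h.symm, if_false]
      omega
    · simp only [fire, huv, huw, if_false]
      omega

theorem Reaches.refl (E : V → V → ℕ) (c : V → ℕ) : Reaches E c c :=
  ⟨[], trivial, rfl⟩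

theorem Reaches.head (h : Firable E c v) (hd : Reaches E (fire E c v) d) : Reaches E c d := by
  obtain ⟨l, hl, rfl⟩ := hd
  exact ⟨v :: l, ⟨h, hl⟩, rfl⟩

theorem Reaches.tail (hd : Reaches E c d) (h : Firable E d v) : Reaches E c (fire E d v) := by
  obtain ⟨l, hl, rfl⟩ := hd
  induction l generalizing c with
  | nil => exact .head h (.refl E _)
  | cons w l ih => exact .head hl.1 (ih hl.2 h)

theorem Reaches.le_apply_of_not_reaches_fire (hd : Reaches E c d) (hv : Firable E c v)
    (h : ¬ Reaches E (fire E c v) d) : c v ≤ d v := by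
  obtain ⟨l, hl, rfl⟩ := hd
  induction l generalizing c with
  | nil => exact le_rfl
  | cons w l ih =>
    obtain ⟨hw, hl⟩ := hl
    have hvw : v ≠ w := by
      rintro rfl
      exact h ⟨l, hl, rfl⟩
    have hnot : ¬ Reaches E (fire E (fire E c w) v) (fireList E (fire E c w) l) := by
      rw [fire_comm hv hw hvw]
      exact fun hr => h (.head (hw.fire_of_ne hvw.symm) hr)
    exact (le_fire_apply_of_ne hvw).trans (ih (hv.fire_of_ne hvw) hl hnot)

end ChipFiring

section MeetIrreducible

variable {L : Type*} [Lattice L]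

theorem meetIrred_of_infIrred [IsStronglyAtomic L] {m : L} (hm : InfIrred m) : MeetIrred m := by
  obtain ⟨a, hma⟩ := not_isMax_iff.1 hm.1
  obtain ⟨y, hy, -⟩ := exists_covBy_le_of_lt hma
  refine ⟨y, hy, fun z hz => ?_⟩
  rcases hz.eq_or_eq (le_inf hz.le hy.le) inf_le_left with hinf | hinf
  · exact ((hm.2 hinf).elim hz.ne' hy.ne').elim
  · exact (hy.eq_or_eq hz.le (inf_eq_left.1 hinf)).resolve_left hz.ne'

theorem msetDiff_nonempty_of_not_le [OrderTop L] [WellFoundedGT L] [IsStronglyAtomic L] {x y : L}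
    (h : ¬ y ≤ x) : (MsetDiff x y).Nonempty := by
  obtain ⟨s, rfl, hs⟩ := exists_infIrred_decomposition x
  obtain ⟨m, hms, hym⟩ : ∃ m ∈ s, ¬ y ≤ m := by simpa [Finset.le_inf_iff] using h
  exact ⟨m, meetIrred_of_infIrred (hs hms), Finset.inf_le hms, hym⟩

/-- The graph `H` of the theorem: its vertices are the meet-irreducibles of `L`, and two of them are
adjacent when they label two upper covers of the same element. As `MsetDiff` is set-valued, the
labelling condition `𝔪(x, y) = m` reads `MsetDiff x y = {m}`. -/
def coverLabelGraph (L : Type*) [Lattice L] : SimpleGraph {m : L // MeetIrred m} where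
  Adj m₁ m₂ := m₁ ≠ m₂ ∧ ∃ x₁ x₂ x₃ : L, x₁ ⋖ x₂ ∧ x₁ ⋖ x₃ ∧
    MsetDiff x₁ x₂ = {m₁.val} ∧ MsetDiff x₁ x₃ = {m₂.val}
  symm := ⟨fun _ _ ⟨hne, x₁, x₂, x₃, h₂, h₃, hm₁, hm₂⟩ => ⟨hne.symm, x₁, x₃, x₂, h₃, h₂, hm₂, hm₁⟩⟩
  loopless := ⟨fun _ h => h.1 rfl⟩

end MeetIrreducible

/-- `c` identifies the order `L` with a set of configurations ordered by reachability and closed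
under firing. This is how the rest of the argument uses an isomorphism of `L` with a configuration
space, without carrying along the initial configuration. The vertex set may be infinite, but
`outDeg` takes the junk value `0` on a vertex with infinitely many out-neighbours, so these are
excluded. -/
structure IsConfigModel {V L : Type*} [LE L] (E : V → V → ℕ) (c : L → V → ℕ) : Prop where
  finite_support (v : V) : (E v).support.Finite
  le_iff_reaches {x y : L} : x ≤ y ↔ Reaches E (c x) (c y)
  exists_fireStep {x : L} {v : V} : Firable E (c x) v → ∃ y, FireStep E (c x) v (c y)

theorem Generates.exists_isConfigModel {V L : Type*} [PartialOrder L] {E : V → V → ℕ} {O : V → ℕ}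
    (hE : ∀ v, (E v).support.Finite) (h : Generates E O L) :
    ∃ c : L → V → ℕ, IsConfigModel E c ∧ ∃ x, c x = O := by
  obtain ⟨f, hf⟩ := h
  refine ⟨fun x => (f x).val, ⟨hE, hf _ _, fun {x v} hv => ?_⟩, f.symm ⟨O, .refl E O⟩, by simp⟩
  exact ⟨f.symm ⟨_, (f x).2.tail hv⟩, hv, by simp⟩

namespace IsConfigModel

section PartialOrder

variable {V L : Type*} [PartialOrder L] {E : V → V → ℕ} {c : L → V → ℕ} {v w : V} {x y z : L}

theorem injective (hc : IsConfigModel E c) : Function.Injective c := fun x _ hxy =>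
  have hreach := Reaches.refl E (c x)
  le_antisymm (hc.le_iff_reaches.2 (hxy ▸ hreach)) (hc.le_iff_reaches.2 (hxy ▸ hreach))

theorem le_of_fireStep (hc : IsConfigModel E c) (h : FireStep E (c x) v (c y)) : x ≤ y :=
  hc.le_iff_reaches.2 (h.2 ▸ .head h.1 (.refl E _))

theorem exists_fireStep_le_of_lt (hc : IsConfigModel E c) (h : x < y) :
    ∃ v z, FireStep E (c x) v (c z) ∧ z ≤ y := by
  obtain ⟨l, hl, hy⟩ := hc.le_iff_reaches.1 h.le
  cases l with
  | nil => exact absurd (hc.injective hy) h.ne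
  | cons v l =>
    obtain ⟨z, hz⟩ := hc.exists_fireStep hl.1
    exact ⟨v, z, hz, hc.le_iff_reaches.2 (hz.2 ▸ ⟨l, hl.2, hy⟩)⟩

theorem exists_fireStep_of_mem (hc : IsConfigModel E c) {l : List V} (hl : ValidSeq E (c x) l)
    (hv : v ∈ l) : ∃ y z, x ≤ y ∧ FireStep E (c y) v (c z) := by
  induction l generalizing x with
  | nil => simp at hv
  | cons w l ih =>
    obtain ⟨z, hz⟩ := hc.exists_fireStep hl.1
    rcases List.mem_cons.1 hv with rfl | hv
    · exact ⟨x, z, le_rfl, hz⟩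
    · obtain ⟨y', z', hzy', hstep⟩ := ih (hz.2 ▸ hl.2) hv
      exact ⟨y', z', (hc.le_of_fireStep hz).trans hzy', hstep⟩

theorem lt_of_fireStep (hc : IsConfigModel E c) (h : FireStep E (c x) v (c y)) : x < y := by
  refine (hc.le_of_fireStep h).lt_of_ne ?_
  rintro rfl
  exact (fire_apply_self_lt (hc.finite_support v) h.1).ne (congrFun h.2 v)

theorem vertex_eq_of_fireStep_of_le (hc : IsConfigModel E c) (hv : FireStep E (c x) v (c y))
    (hw : FireStep E (c x) w (c z)) (hzy : z ≤ y) : v = w := by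
  by_contra hvw
  have hvz : Firable E (c z) v := hw.2 ▸ hv.1.fire_of_ne hvw
  have hnot : ¬ Reaches E (fire E (c z) v) (c y) := by
    have hwy : Firable E (c y) w := hv.2 ▸ hw.1.fire_of_ne (Ne.symm hvw)
    obtain ⟨t, ht⟩ := hc.exists_fireStep hwy
    rw [← hw.2, fire_comm hv.1 hw.1 hvw, hv.2, ht.2, ← hc.le_iff_reaches]
    exact (hc.lt_of_fireStep ht).not_ge
  have hle : c x v ≤ c y v := calc
    c x v ≤ c z v := hw.2 ▸ le_fire_apply_of_ne hvw
    _ ≤ c y v := (hc.le_iff_reaches.1 hzy).le_apply_of_not_reaches_fire hvz hnot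
  exact hle.not_gt (hv.2 ▸ fire_apply_self_lt (hc.finite_support v) hv.1)

theorem covBy_iff_exists_fireStep (hc : IsConfigModel E c) :
    x ⋖ y ↔ ∃ v, FireStep E (c x) v (c y) := by
  constructor
  · intro h
    obtain ⟨v, z, hz, hzy⟩ := hc.exists_fireStep_le_of_lt h.lt
    obtain rfl : z = y := hzy.eq_of_not_lt (h.2 (hc.lt_of_fireStep hz))
    exact ⟨v, hz⟩
  · rintro ⟨v, hv⟩
    refine ⟨hc.lt_of_fireStep hv, fun t hxt hty => ?_⟩
    obtain ⟨w, z, hw, hzt⟩ := hc.exists_fireStep_le_of_lt hxt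
    obtain rfl := hc.vertex_eq_of_fireStep_of_le hv hw (hzt.trans hty.le)
    obtain rfl : z = y := hc.injective (hw.2.symm.trans hv.2)
    exact hty.not_ge hzt

end PartialOrder

section Lattice

variable {V L : Type*} [Lattice L] {E : V → V → ℕ} {c : L → V → ℕ} {v : V}
  {x y x' y' m : L}

theorem existsUnique_firable (hc : IsConfigModel E c) (hm : MeetIrred m) :
    ∃! v, Firable E (c m) v := by
  obtain ⟨y, hy, hy_unique⟩ := hm
  obtain ⟨v, hv⟩ := hc.covBy_iff_exists_fireStep.1 hy
  refine ⟨v, hv.1, fun w hw => ?_⟩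
  obtain ⟨z, hz⟩ := hc.exists_fireStep hw
  have hzy : z = y := hy_unique z (hc.covBy_iff_exists_fireStep.2 ⟨w, hz⟩)
  exact (hc.vertex_eq_of_fireStep_of_le hv hz hzy.le).symm

/-- The unique vertex firable in the configuration of a meet-irreducible element. -/
noncomputable def firingVertex (hc : IsConfigModel E c) (m : {m : L // MeetIrred m}) : V :=
  (hc.existsUnique_firable m.2).choose

theorem firingVertex_eq_of_mem_msetDiff (hc : IsConfigModel E c) (h : FireStep E (c x) v (c y))
    (hm : m ∈ MsetDiff x y) : hc.firingVertex ⟨m, hm.1⟩ = v := by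
  obtain ⟨hm_irred, hxm, hym⟩ := hm
  have hnot : ¬ Reaches E (fire E (c x) v) (c m) := by
    rwa [h.2, ← hc.le_iff_reaches]
  have hv : Firable E (c m) v :=
    h.1.of_le ((hc.le_iff_reaches.1 hxm).le_apply_of_not_reaches_fire h.1 hnot)
  exact ((hc.existsUnique_firable hm_irred).choose_spec.2 v hv).symm

/-- The proper colouring of the graph `H` by firing vertices. -/
noncomputable def coloring (hc : IsConfigModel E c) : (coverLabelGraph L).Coloring V :=
  .mk hc.firingVertex <| by
    rintro m₁ m₂ ⟨hne, x, y, z, hxy, hxz, hm₁, hm₂⟩ heq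
    obtain ⟨v, hv⟩ := hc.covBy_iff_exists_fireStep.1 hxy
    obtain ⟨w, hw⟩ := hc.covBy_iff_exists_fireStep.1 hxz
    have hm₁v : hc.firingVertex m₁ = v := hc.firingVertex_eq_of_mem_msetDiff hv (hm₁ ▸ rfl)
    have hm₂w : hc.firingVertex m₂ = w := hc.firingVertex_eq_of_mem_msetDiff hw (hm₂ ▸ rfl)
    obtain rfl : v = w := by rw [← hm₁v, heq, hm₂w]
    obtain rfl : y = z := hc.injective (hv.2.symm.trans hw.2)
    exact hne (Subtype.ext (Set.singleton_injective (hm₁.symm.trans hm₂)))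

variable [OrderTop L] [WellFoundedGT L] [IsStronglyAtomic L]

theorem not_fireStep_of_fireStep_of_le (hc : IsConfigModel E c) (hH : coverLabelGraph L = ⊤)
    (h : FireStep E (c x) v (c y)) (hyx' : y ≤ x') : ¬ FireStep E (c x') v (c y') := by
  intro h'
  obtain ⟨m, hm⟩ := msetDiff_nonempty_of_not_le (hc.lt_of_fireStep h).not_ge
  obtain ⟨m', hm'⟩ := msetDiff_nonempty_of_not_le (hc.lt_of_fireStep h').not_ge
  have hne : m ≠ m' := by
    rintro rfl
    exact hm.2.2 (hyx'.trans hm'.2.1)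
  have hadj : (coverLabelGraph L).Adj ⟨m, hm.1⟩ ⟨m', hm'.1⟩ := by
    simpa [hH] using hne
  exact hc.coloring.valid hadj <| (hc.firingVertex_eq_of_mem_msetDiff h hm).trans
    (hc.firingVertex_eq_of_mem_msetDiff h' hm').symm

theorem nodup_of_validSeq (hc : IsConfigModel E c) (hH : coverLabelGraph L = ⊤) {l : List V}
    (hl : ValidSeq E (c x) l) : l.Nodup := by
  induction l generalizing x with
  | nil => exact List.nodup_nil
  | cons v l ih =>
    obtain ⟨y, hy⟩ := hc.exists_fireStep hl.1
    have hl_tail : ValidSeq E (c y) l := hy.2 ▸ hl.2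
    refine List.nodup_cons.2 ⟨fun hv => ?_, ih hl_tail⟩
    obtain ⟨x', y', hyx', hx'⟩ := hc.exists_fireStep_of_mem hl_tail hv
    exact hc.not_fireStep_of_fireStep_of_le hH hy hyx' hx'

end Lattice

end IsConfigModel

theorem stmt12_general {L : Type*} [Lattice L] [OrderTop L] [WellFoundedGT L] [IsStronglyAtomic L]
    (hH : ∀ m₁ m₂ : L, MeetIrred m₁ → MeetIrred m₂ → m₁ ≠ m₂ →
      ∃ x₁ x₂ x₃ : L, x₁ ⋖ x₂ ∧ x₁ ⋖ x₃ ∧ MsetDiff x₁ x₂ = {m₁} ∧ MsetDiff x₁ x₃ = {m₂})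
    {V : Type*} (E : V → V → ℕ) (O : V → ℕ) (hE : ∀ v, (E v).support.Finite)
    (hgen : Generates E O L) : SimpleCFG E O := by
  obtain ⟨c, hc, x, rfl⟩ := hgen.exists_isConfigModel hE
  have hcomplete : coverLabelGraph L = ⊤ := top_le_iff.1 fun m₁ m₂ hne =>
    ⟨hne, hH m₁ m₂ m₁.2 m₂.2 (Subtype.coe_ne_coe.2 hne)⟩
  exact fun l hl _ => hc.nodup_of_validSeq hcomplete hl

/-- if `L ∈ L(CFG)` and the graph `H` on the meet-irreducibles (with
`m₁ ~ m₂` iff some element has two upper covers labeled `m₁` and `m₂`) is complete,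
then every CFG reaching a unique fixed point generating `L` is simple. -/
theorem stmt12 {L : Type*} [Lattice L] [Fintype L] [BoundedOrder L]
    (hULD : IsULD L) (hLCFG : MemLCFG L)
    (hH : ∀ m₁ m₂ : L, MeetIrred m₁ → MeetIrred m₂ → m₁ ≠ m₂ →
      ∃ x₁ x₂ x₃ : L, x₁ ⋖ x₂ ∧ x₁ ⋖ x₃ ∧ MsetDiff x₁ x₂ = {m₁} ∧ MsetDiff x₁ x₃ = {m₂})
    {V : Type*} [Finite V] (E : V → V → ℕ) (O : V → ℕ)
    (hUFP : ReachesUFP E O) (hgen : Generates E O L) :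
    SimpleCFG E O := by
  exact stmt12_general hH E O (fun _ => Set.toFinite _) hgen
end
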